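/- Let R be a smooth function on a neighborhood of the origin in ℝ² with R(0,0) = 0 and nonvanishing Taylor series. Let (0,d) ∈ supp(R) and M₁ > 0 be such that a + M₁ b ≥ M₁ d for every (a,b) ∈ supp(R) (so (0,d) is the upper vertex, lying on the t₂-axis, of a compact edge of N(R) of slope −1/M₁). Then there exist N > 0 and a neighborhood U of the origin such that for all (x,y) ∈ U with N|x|^{M₁} < |y|, one has (1/2)|R_{0d}| |y|^d < |R(x,y)| < 2 |R_{0d}| |y|^d. -/

import Mathlib

open MeasureTheory Set Filter Topology

noncomputable section

/-- Iterated partial derivative `∂ₓᵃ ∂ᵧᵇ R` at `(x, y)`. -/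
def pderiv2 (R : ℝ → ℝ → ℝ) (a b : ℕ) (x y : ℝ) : ℝ :=
  iteratedDeriv a (fun x' => iteratedDeriv b (fun y' => R x' y') y) x

/-- Taylor coefficient `R_{ab} = ∂ₓᵃ ∂ᵧᵇ R(0,0) / (a! b!)`. -/
def tcoeff (R : ℝ → ℝ → ℝ) (a b : ℕ) : ℝ :=
  pderiv2 R a b 0 0 / (Nat.factorial a * Nat.factorial b)

/-- The support of the Taylor series of `R` at the origin. -/
def tsupp (R : ℝ → ℝ → ℝ) : Set (ℕ × ℕ) := {p | tcoeff R p.1 p.2 ≠ 0}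

/-- The Newton polygon of `R`. -/
def newtonPolygon (R : ℝ → ℝ → ℝ) : Set (ℝ × ℝ) :=
  convexHull ℝ (⋃ p ∈ tsupp R, {q : ℝ × ℝ | (p.1 : ℝ) ≤ q.1 ∧ (p.2 : ℝ) ≤ q.2})

/-- The Newton distance of `R`. -/
def newtonDist (R : ℝ → ℝ → ℝ) : ℝ := sInf {t : ℝ | (t, t) ∈ newtonPolygon R}

/-- `e` is a compact edge of `N(R)` of slope `-1/M` (with `M > 0`): it is the
(one-dimensional, compact) face of the Newton polygon cut out by a supporting line
`t₁ + M t₂ = c`. -/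
def IsCompactEdge (R : ℝ → ℝ → ℝ) (M : ℝ) (e : Set (ℝ × ℝ)) : Prop :=
  0 < M ∧ ∃ c : ℝ, (∀ q ∈ newtonPolygon R, c ≤ q.1 + M * q.2) ∧
    e = {q ∈ newtonPolygon R | q.1 + M * q.2 = c} ∧
    ∃ v w : ℝ × ℝ, v ≠ w ∧ e = segment ℝ v w

/-- The edge polynomial `R_e(x,y) = Σ_{(a,b) ∈ e ∩ supp R} R_{ab} x^a y^b`. -/
def edgePoly (R : ℝ → ℝ → ℝ) (e : Set (ℝ × ℝ)) (x y : ℝ) : ℝ :=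
  ∑' p : ℕ × ℕ,
    Set.indicator {p : ℕ × ℕ | ((p.1 : ℝ), (p.2 : ℝ)) ∈ e}
      (fun p => tcoeff R p.1 p.2 * x ^ p.1 * y ^ p.2) p

/-- `p` has a zero of order exactly `m` at `y₀`. -/
def ZeroOfOrder (p : ℝ → ℝ) (m : ℕ) (y₀ : ℝ) : Prop :=
  (∀ j < m, iteratedDeriv j p y₀ = 0) ∧ iteratedDeriv m p y₀ ≠ 0

/-- `R` is in nonadapted coordinates: the bisectrix meets the interior of a compact
edge `e` such that `R_e(1, ⬝)` has a real zero of order greater than `d(R)`. -/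
def IsNonadapted (R : ℝ → ℝ → ℝ) : Prop :=
  ∃ (M : ℝ) (e : Set (ℝ × ℝ)) (v w : ℝ × ℝ), IsCompactEdge R M e ∧ v ≠ w ∧
    e = segment ℝ v w ∧ (∃ t : ℝ, (t, t) ∈ openSegment ℝ v w) ∧
    ∃ (y₀ : ℝ) (m : ℕ), newtonDist R < (m : ℝ) ∧
      ZeroOfOrder (fun y => edgePoly R e 1 y) m y₀

/-- `R` is in generic adapted coordinates: adapted coordinates, every compact edge has slope
at least `-1`, and the Newton polygon meets the `t₂`-axis. -/
def GenericAdapted (R : ℝ → ℝ → ℝ) : Prop :=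
  ¬ IsNonadapted R ∧ (∀ M e, IsCompactEdge R M e → 1 ≤ M) ∧
    ∃ t : ℝ, ((0 : ℝ), t) ∈ newtonPolygon R

/-- `α_M(R) = min {a + M b : (a,b) ∈ supp R}`. -/
def alphaM (R : ℝ → ℝ → ℝ) (M : ℝ) : ℝ :=
  sInf {t : ℝ | ∃ p ∈ tsupp R, t = (p.1 : ℝ) + M * p.2}

/-- `R_M`, the sum of the terms of the Taylor series of `R` of minimal `M`-weighted degree. -/
def RMpart (R : ℝ → ℝ → ℝ) (M : ℝ) (x y : ℝ) : ℝ :=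
  ∑' p : ℕ × ℕ,
    Set.indicator {p : ℕ × ℕ | p ∈ tsupp R ∧ (p.1 : ℝ) + M * p.2 = alphaM R M}
      (fun p => tcoeff R p.1 p.2 * x ^ p.1 * y ^ p.2) p

/-- The Hessian determinant of `f`. -/
def hessDet (f : ℝ → ℝ → ℝ) (x y : ℝ) : ℝ :=
  pderiv2 f 2 0 x y * pderiv2 f 0 2 x y - (pderiv2 f 1 1 x y) ^ 2

/-- `F*(x,y) = (Σ_{(a,b) vertex of N(F)} x^{2a} y^{2b})^{1/2}`. -/
def vertexFn (F : ℝ → ℝ → ℝ) (x y : ℝ) : ℝ :=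
  Real.sqrt (∑' p : ℕ × ℕ,
    Set.indicator
      {p : ℕ × ℕ | ((p.1 : ℝ), (p.2 : ℝ)) ∈ (newtonPolygon F).extremePoints ℝ}
      (fun p => x ^ (2 * p.1) * y ^ (2 * p.2)) p)

/-- A function with `n`-th derivative bounded by `C` near `0` is within `C |y|ⁿ` of its Taylor
polynomial of degree less than `n` at `0`. -/
theorem abs_sub_taylor_le {n : ℕ} {f : ℝ → ℝ} {r C : ℝ}
    (hf : ContDiffOn ℝ (⊤ : ℕ∞) f (Metric.ball 0 r))
    (hC : ∀ y ∈ Metric.ball (0 : ℝ) r, |iteratedDeriv n f y| ≤ C) :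
    ∀ y ∈ Metric.ball (0 : ℝ) r,
      |f y - ∑ k ∈ Finset.range n, iteratedDeriv k f 0 / k.factorial * y ^ k| ≤ C * |y| ^ n := by
  induction n generalizing f with
  | zero => simpa using hC
  | succ n ih =>
    intro y hy
    have hf' : ContDiffOn ℝ (⊤ : ℕ∞) (deriv f) (Metric.ball 0 r) :=
      hf.deriv_of_isOpen Metric.isOpen_ball (by simp)
    have key := ih hf' (by simpa only [iteratedDeriv_succ'] using hC)
    have hC0 : 0 ≤ C := (abs_nonneg _).trans (hC y hy)
    have hsub : Metric.closedBall (0 : ℝ) |y| ⊆ Metric.ball 0 r := by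
      apply Metric.closedBall_subset_ball
      simpa using hy
    have hderiv : ∀ t ∈ Metric.closedBall (0 : ℝ) |y|, HasDerivWithinAt
        (fun y => f y - ∑ k ∈ Finset.range (n + 1), iteratedDeriv k f 0 / k.factorial * y ^ k)
        (deriv f t - ∑ k ∈ Finset.range n,
          iteratedDeriv k (deriv f) 0 / k.factorial * t ^ k)
        (Metric.closedBall (0 : ℝ) |y|) t := by
      intro t ht
      apply HasDerivAt.hasDerivWithinAt
      apply HasDerivAt.sub
      · exact ((hf.contDiffAt (Metric.isOpen_ball.mem_nhds (hsub ht))).differentiableAt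
          (by simp)).hasDerivAt
      · have h := HasDerivAt.fun_sum (u := Finset.range (n + 1)) (x := t)
          (A := fun k y => iteratedDeriv k f 0 / k.factorial * y ^ k)
          (A' := fun k => iteratedDeriv k f 0 / k.factorial * (k * t ^ (k - 1)))
          (fun k _ => (hasDerivAt_pow k t).const_mul _)
        refine h.congr_deriv ?_
        rw [Finset.sum_range_succ']
        simp only [Nat.cast_zero, zero_mul, mul_zero, add_zero, iteratedDeriv_succ']
        refine Finset.sum_congr rfl fun k _ => ?_
        have := Nat.factorial_ne_zero k
        rw [Nat.factorial_succ, Nat.add_sub_cancel]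
        push_cast
        field_simp
    have hbound : ∀ t ∈ Metric.closedBall (0 : ℝ) |y|,
        ‖deriv f t - ∑ k ∈ Finset.range n, iteratedDeriv k (deriv f) 0 / k.factorial * t ^ k‖
          ≤ C * |y| ^ n := by
      intro t ht
      refine (key t (hsub ht)).trans ?_
      have : |t| ≤ |y| := by simpa using ht
      gcongr
    have h := (convex_closedBall (0 : ℝ) |y|).norm_image_sub_le_of_norm_hasDerivWithin_le
      hderiv hbound (x := 0) (y := y) (by simp) (by simp)
    have hz : ∑ k ∈ Finset.range (n + 1),
        iteratedDeriv k f 0 / k.factorial * (0 : ℝ) ^ k = f 0 := by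
      rw [Finset.sum_range_succ']
      simp
    simp only [hz, sub_self, sub_zero, Real.norm_eq_abs] at h
    simpa only [pow_succ, mul_assoc] using h

/-- Iterated partial derivatives in the second variable of a smooth function are smooth. -/
theorem contDiffOn_iteratedDeriv_snd {R : ℝ → ℝ → ℝ} {V : Set (ℝ × ℝ)} (hV : IsOpen V)
    (hR : ContDiffOn ℝ (⊤ : ℕ∞) (fun p : ℝ × ℝ => R p.1 p.2) V) (b : ℕ) :
    ContDiffOn ℝ (⊤ : ℕ∞) (fun p : ℝ × ℝ => iteratedDeriv b (R p.1) p.2) V := by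
  induction b with
  | zero => simpa using hR
  | succ b ih =>
    have hfd := (ih.fderiv_of_isOpen hV (m := (⊤ : ℕ∞)) (by simp)).clm_apply
      (contDiffOn_const (c := ((0 : ℝ), (1 : ℝ))))
    refine hfd.congr fun p hp => ?_
    have h1 := ((ih.contDiffAt (hV.mem_nhds hp)).differentiableAt (by simp)).hasFDerivAt
    have h2 : HasDerivAt (fun y : ℝ => (p.1, y)) ((0 : ℝ), (1 : ℝ)) p.2 :=
      (hasDerivAt_const p.2 p.1).prodMk (hasDerivAt_id p.2)
    have h3 := HasFDerivAt.comp_hasDerivAt p.2 (f := fun y : ℝ => (p.1, y)) h1 h2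
    rw [iteratedDeriv_succ]
    exact h3.deriv

/-- Iterated derivatives of a smooth function on an open set are smooth. -/
theorem contDiffOn_iteratedDeriv {g : ℝ → ℝ} {V : Set ℝ} (hV : IsOpen V)
    (hg : ContDiffOn ℝ (⊤ : ℕ∞) g V) (m : ℕ) :
    ContDiffOn ℝ (⊤ : ℕ∞) (iteratedDeriv m g) V := by
  induction m with
  | zero => simpa using hg
  | succ m ih =>
    rw [iteratedDeriv_succ]
    exact ih.deriv_of_isOpen hV (by simp)

/-- A smooth function whose derivatives of order less than `m` vanish at `0` is `O(|x|ᵐ)`. -/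
theorem exists_eventually_abs_le_pow {g : ℝ → ℝ} {r : ℝ} (hr : 0 < r)
    (hg : ContDiffOn ℝ (⊤ : ℕ∞) g (Metric.ball 0 r)) {m : ℕ}
    (h0 : ∀ a < m, iteratedDeriv a g 0 = 0) :
    ∃ C, 0 ≤ C ∧ ∀ᶠ x in 𝓝 (0 : ℝ), |g x| ≤ C * |x| ^ m := by
  have hcont : ContinuousAt (iteratedDeriv m g) 0 :=
    (contDiffOn_iteratedDeriv Metric.isOpen_ball hg m).continuousOn.continuousAt
      (Metric.ball_mem_nhds 0 hr)
  have hev : ∀ᶠ x in 𝓝 (0 : ℝ), |iteratedDeriv m g x| < |iteratedDeriv m g 0| + 1 :=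
    hcont.abs.eventually_lt_const (by linarith)
  obtain ⟨ε, hε, hball⟩ := Metric.eventually_nhds_iff_ball.1
    (hev.and (Metric.ball_mem_nhds (0 : ℝ) hr))
  refine ⟨|iteratedDeriv m g 0| + 1, by positivity, ?_⟩
  filter_upwards [Metric.ball_mem_nhds (0 : ℝ) hε] with x hx
  have h := abs_sub_taylor_le (hg.mono fun y hy => (hball y hy).2)
    (fun y hy => (hball y hy).1.le) x hx
  rwa [Finset.sum_eq_zero, sub_zero] at h
  intro k hk
  rw [h0 k (Finset.mem_range.1 hk), zero_div, zero_mul]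

/-- In the region `|x|^M < s^M |y|`, monomials on or above the line `a + M b = M d` with `a ≥ 1`
are at most `s |y|ᵈ`. -/
theorem abs_pow_mul_abs_pow_le {M s x y : ℝ} (hM : 0 < M) (hs : 0 < s) (hs1 : s ≤ 1)
    (hy1 : |y| ≤ 1) (hxy : s ^ (-M) * |x| ^ M < |y|) {a b d : ℕ} (ha : 1 ≤ a)
    (hab : M * d ≤ a + M * b) : |x| ^ a * |y| ^ b ≤ s * |y| ^ d := by
  have hy : 0 < |y| := lt_of_le_of_lt (by positivity) hxy
  set t := |y| ^ M⁻¹ with ht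
  have ht0 : 0 < t := by positivity
  have ht1 : t ≤ 1 := Real.rpow_le_one hy.le hy1 (by positivity)
  have hyt : |y| = t ^ M := by rw [ht, Real.rpow_inv_rpow hy.le hM.ne']
  have hx : |x| ≤ s * t := by
    rw [← Real.rpow_le_rpow_iff (abs_nonneg x) (by positivity) hM,
      Real.mul_rpow hs.le ht0.le, ← hyt]
    rw [Real.rpow_neg hs.le, inv_mul_lt_iff₀ (by positivity)] at hxy
    exact hxy.le
  calc |x| ^ a * |y| ^ b ≤ (s * t) ^ a * |y| ^ b := by gcongr
    _ = s ^ a * t ^ ((a : ℝ) + M * b) := by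
      rw [hyt, mul_pow, Real.rpow_add ht0, Real.rpow_natCast, Real.rpow_mul ht0.le,
        Real.rpow_natCast, mul_assoc]
    _ ≤ s * t ^ (M * d) := by
      gcongr ?_ * ?_
      · exact pow_le_of_le_one hs.le hs1 (by omega)
      · exact Real.rpow_le_rpow_of_exponent_ge ht0 ht1 hab
    _ = s * |y| ^ d := by rw [hyt, Real.rpow_mul ht0.le, Real.rpow_natCast]

/-- Lemma 2.2 (vertex on the `t₂`-axis): near the origin, in the region
`N|x|^{M₁} < |y|`, `R` is comparable to its vertex monomial `R_{0d} y^d`. -/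
theorem stmt_3 (R : ℝ → ℝ → ℝ) (U₀ : Set (ℝ × ℝ)) (hU₀ : U₀ ∈ 𝓝 ((0 : ℝ), (0 : ℝ)))
    (hsm : ContDiffOn ℝ (⊤ : ℕ∞) (fun p : ℝ × ℝ => R p.1 p.2) U₀)
    (h0 : R 0 0 = 0) (hts : (tsupp R).Nonempty)
    (d : ℕ) (hd : ((0 : ℕ), d) ∈ tsupp R) (M₁ : ℝ) (hM₁ : 0 < M₁)
    (h₁ : ∀ p ∈ tsupp R, M₁ * d ≤ (p.1 : ℝ) + M₁ * p.2) :
    ∃ N > (0 : ℝ), ∃ U ∈ 𝓝 ((0 : ℝ), (0 : ℝ)), ∀ x y : ℝ, (x, y) ∈ U →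
      N * |x| ^ M₁ < |y| →
      (1 / 2) * |tcoeff R 0 d| * |y| ^ d < |R x y| ∧
        |R x y| < 2 * |tcoeff R 0 d| * |y| ^ d := by
  obtain ⟨r, hr, hrU⟩ := Metric.mem_nhds_iff.1 hU₀
  have hmem : ∀ {x y : ℝ}, x ∈ Metric.ball (0 : ℝ) r → y ∈ Metric.ball (0 : ℝ) r →
      (x, y) ∈ Metric.ball ((0 : ℝ), (0 : ℝ)) r := fun hx hy => by
    rw [← ball_prod_same]; exact ⟨hx, hy⟩
  have hG := contDiffOn_iteratedDeriv_snd Metric.isOpen_ball (hsm.mono hrU)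
  have hg : ∀ b, ContDiffOn ℝ (⊤ : ℕ∞) (fun x => iteratedDeriv b (R x) 0)
      (Metric.ball 0 r) := fun b =>
    (hG b).comp (f := fun x : ℝ => (x, (0 : ℝ))) (contDiffOn_id.prodMk contDiffOn_const)
      fun x hx => hmem hx (Metric.mem_ball_self hr)
  have hc : 0 < |tcoeff R 0 d| := abs_pos.2 hd
  -- Terms below the vertex.
  have hlow : ∀ b, ∃ C, 0 ≤ C ∧ (b < d → ∃ m : ℕ, 1 ≤ m ∧ M₁ * d ≤ m + M₁ * b ∧
      ∀ᶠ x in 𝓝 (0 : ℝ), |iteratedDeriv b (R x) 0| ≤ C * |x| ^ m) := by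
    intro b
    by_cases hb : b < d
    · have hb' : (b : ℝ) < d := by exact_mod_cast hb
      obtain ⟨C, hC, h⟩ := exists_eventually_abs_le_pow hr (hg b) (m := ⌈M₁ * (d - b)⌉₊) (by
        intro a ha
        by_contra hne
        have := h₁ (a, b) (by
          refine div_ne_zero hne ?_
          positivity)
        have := Nat.lt_ceil.1 ha
        simp only at *
        linarith)
      refine ⟨C, hC, fun _ => ⟨_, Nat.ceil_pos.2 (mul_pos hM₁ (sub_pos.2 hb')), ?_, h⟩⟩
      have := Nat.le_ceil (M₁ * ((d : ℝ) - b))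
      linarith
    · exact ⟨0, le_rfl, fun h => absurd h hb⟩
  choose C hC0 hC using hlow
  set S := ∑ b ∈ Finset.range d, C b
  have hS0 : 0 ≤ S := Finset.sum_nonneg fun b _ => hC0 b
  obtain ⟨s, hs, hs1, hsS⟩ : ∃ s : ℝ, 0 < s ∧ s ≤ 1 ∧ s * S ≤ |tcoeff R 0 d| / 8 := by
    have hq : 0 < |tcoeff R 0 d| / (8 * (S + 1)) := by positivity
    refine ⟨min 1 (|tcoeff R 0 d| / (8 * (S + 1))), lt_min one_pos hq, min_le_left _ _, ?_⟩
    calc _ ≤ |tcoeff R 0 d| / (8 * (S + 1)) * (S + 1) :=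
          mul_le_mul (min_le_right _ _) (by linarith) hS0 hq.le
      _ = |tcoeff R 0 d| / 8 := by field_simp
  -- The vertex term.
  have hvert : ∀ᶠ x in 𝓝 (0 : ℝ),
      |iteratedDeriv d (R x) 0 / d.factorial - tcoeff R 0 d| < |tcoeff R 0 d| / 8 := by
    have hcont : ContinuousAt (fun x => iteratedDeriv d (R x) 0) 0 :=
      (hg d).continuousOn.continuousAt (Metric.ball_mem_nhds 0 hr)
    have h0 : iteratedDeriv d (R 0) 0 / d.factorial = tcoeff R 0 d := by
      simp [tcoeff, pderiv2]
    have hcont' : ContinuousAt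
        (fun x => |iteratedDeriv d (R x) 0 / d.factorial - tcoeff R 0 d|) 0 := by fun_prop
    refine hcont'.eventually_lt_const ?_
    beta_reduce
    rw [h0, sub_self, abs_zero]
    positivity
  -- The Taylor remainder in `y`.
  obtain ⟨K, ρ, hρ, hρr, hK⟩ : ∃ K, ∃ ρ > 0, ρ ≤ r ∧
      ∀ p ∈ Metric.ball ((0 : ℝ), (0 : ℝ)) ρ, |iteratedDeriv (d + 1) (R p.1) p.2| ≤ K := by
    have hcont : ContinuousAt (fun p : ℝ × ℝ => iteratedDeriv (d + 1) (R p.1) p.2) (0, 0) :=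
      (hG (d + 1)).continuousOn.continuousAt (Metric.ball_mem_nhds _ hr)
    have hev := hcont.abs.eventually_lt_const (lt_add_one _)
    obtain ⟨ε, hε, h⟩ := Metric.eventually_nhds_iff_ball.1 hev
    exact ⟨_, min ε r, lt_min hε hr, min_le_right _ _, fun p hp =>
      (h p (Metric.ball_subset_ball (min_le_left _ _) hp)).le⟩
  have hlow' : ∀ᶠ x in 𝓝 (0 : ℝ), ∀ b ∈ Finset.range d, ∀ y : ℝ, |y| ≤ 1 →
      s ^ (-M₁) * |x| ^ M₁ < |y| →
      |iteratedDeriv b (R x) 0 / b.factorial * y ^ b| ≤ C b * (s * |y| ^ d) := by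
    rw [Filter.eventually_all_finset]
    intro b hb
    obtain ⟨m, hm, hmb, hev⟩ := hC b (Finset.mem_range.1 hb)
    filter_upwards [hev] with x hx y hy1 hxy
    have hfac : (1 : ℝ) ≤ b.factorial := by exact_mod_cast b.factorial_pos
    calc |iteratedDeriv b (R x) 0 / b.factorial * y ^ b|
        = |iteratedDeriv b (R x) 0| / b.factorial * |y| ^ b := by
          rw [abs_mul, abs_div, abs_pow, Nat.abs_cast]
      _ ≤ |iteratedDeriv b (R x) 0| * |y| ^ b := by
          gcongr
          exact div_le_self (abs_nonneg _) hfac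
      _ ≤ C b * |x| ^ m * |y| ^ b := by gcongr
      _ = C b * (|x| ^ m * |y| ^ b) := mul_assoc _ _ _
      _ ≤ C b * (s * |y| ^ d) := mul_le_mul_of_nonneg_left
          (abs_pow_mul_abs_pow_le hM₁ hs hs1 hy1 hxy hm hmb) (hC0 b)
  have hysmall : ∀ᶠ y in 𝓝 (0 : ℝ), K * |y| < |tcoeff R 0 d| / 8 ∧ |y| < 1 := by
    have hcont : ContinuousAt (fun y : ℝ => K * |y|) 0 := by fun_prop
    have hcont' : ContinuousAt (fun y : ℝ => |y|) 0 := by fun_prop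
    refine (hcont.eventually_lt_const ?_).and (hcont'.eventually_lt_const ?_)
    · beta_reduce
      rw [abs_zero, mul_zero]
      positivity
    · simp
  refine ⟨s ^ (-M₁), by positivity, _, prod_mem_nhds
    ((hlow'.and hvert).and (Metric.ball_mem_nhds (0 : ℝ) hρ))
    (hysmall.and (Metric.ball_mem_nhds (0 : ℝ) hρ)), ?_⟩
  rintro x y ⟨⟨⟨hxlow, hxvert⟩, hxρ⟩, ⟨hyK, hy1⟩, hyρ⟩ hxy
  have hy : 0 < |y| := lt_of_le_of_lt (by positivity) hxy
  have hyd : 0 < |y| ^ d := pow_pos hy d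
  have hmemρ : ∀ t ∈ Metric.ball (0 : ℝ) ρ, (x, t) ∈ Metric.ball ((0 : ℝ), (0 : ℝ)) ρ :=
    fun t ht => by rw [← ball_prod_same]; exact ⟨hxρ, ht⟩
  have htaylor := abs_sub_taylor_le (n := d + 1) (f := R x) (r := ρ) (C := K)
    (((hsm.mono hrU).comp (f := fun t : ℝ => (x, t)) (contDiffOn_const.prodMk contDiffOn_id)
      fun t ht => Metric.ball_subset_ball hρr (hmemρ t ht)))
    (fun t ht => hK (x, t) (hmemρ t ht)) y hyρ
  rw [Finset.sum_range_succ] at htaylor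
  have hsum : |∑ b ∈ Finset.range d, iteratedDeriv b (R x) 0 / b.factorial * y ^ b|
      ≤ |tcoeff R 0 d| / 8 * |y| ^ d := by
    calc _ ≤ ∑ b ∈ Finset.range d, C b * (s * |y| ^ d) :=
          (Finset.abs_sum_le_sum_abs _ _).trans
            (Finset.sum_le_sum fun b hb => hxlow b hb y hy1.le hxy)
      _ = s * S * |y| ^ d := by rw [← Finset.sum_mul]; ring
      _ ≤ _ := by gcongr
  have hrem : K * |y| ^ (d + 1) ≤ |tcoeff R 0 d| / 8 * |y| ^ d := by
    calc K * |y| ^ (d + 1) = K * |y| * |y| ^ d := by ring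
      _ ≤ _ := by gcongr
  have hmain : |iteratedDeriv d (R x) 0 / d.factorial * y ^ d - tcoeff R 0 d * y ^ d|
      ≤ |tcoeff R 0 d| / 8 * |y| ^ d := by
    rw [← sub_mul, abs_mul, abs_pow]
    gcongr
  have herr : |R x y - tcoeff R 0 d * y ^ d| ≤ 3 / 8 * (|tcoeff R 0 d| * |y| ^ d) := by
    rw [abs_le] at *
    constructor <;> linarith
  have hpos : 0 < |tcoeff R 0 d| * |y| ^ d := by positivity
  have habs : |tcoeff R 0 d * y ^ d| = |tcoeff R 0 d| * |y| ^ d := by rw [abs_mul, abs_pow]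
  have hclose := (abs_le.1 ((abs_abs_sub_abs_le _ _).trans herr))
  rw [habs] at hclose
  constructor <;> linarith [hclose.1, hclose.2]

end
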